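/- arXiv:2206.14227 — 2 statements merged into one kernel-verified Lean document; each statement's English description precedes it below -/
import Mathlib

section
/- For all α, β ∈ ASP: (1) for each a,b ∈ ℤ the set {s_α(a,ℓ) − s_{β⁻¹}(b,ℓ) : ℓ ∈ ℤ} has a maximum, and there is a unique permutation α ◁ β ∈ ASP with s_{α◁β}(a,b) = max_{ℓ∈ℤ} [s_α(a,ℓ) − s_{β⁻¹}(b,ℓ)] for all a,b ∈ ℤ; (2) α ◁ β⁻¹ is the minimum in Bruhat order of the set {γ ∈ ASP : γ ⋆ β ≥ α}; (3) for all n ∈ ℤ, α ◁ σ_n equals α ∘ σ_n if α(n) > α(n+1), and equals α otherwise. -/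
/-!
Both `⋆` and `◁` are computed at the level of slipface functions. The integer functions on `ℤ × ℤ`
of the form `s_γ`, `γ ∈ ASP`, are characterised by `IsSlip`: they are monotone and 1-Lipschitz in
each variable, satisfy the Monge inequality
`s(a,b) + s(a',b') ≤ s(a',b) + s(a,b')` for `a ≤ a'`, `b ≤ b'`, are bounded below by `0` and by
`a - b + χ`, and each of these bounds is attained on every row and every column
(`isSlip_sF`, `IsSlip.exists_perm`). In one direction, `χ` is the constant value of
`s_α(a,b) - s_{α⁻¹}(b,a) - (a - b)`. In the other, the differences
`s(a,n) - s(a,n+1)` are monotone in `a` with values in `{0,1}`, so they jump at exactly one place,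
which is `γ(n)`; the differences in `a` yield the inverse in the same way.

The min-plus product and the max-minus product of two Monge functions are again Monge
(`IsSlip.minPlus`, `IsSlip.maxMinus`), which yields the existence of `α ⋆ β` and `α ◁ β`. Uniqueness
holds because `s_γ` determines `γ`. The minimality of `α ◁ β⁻¹` is the adjunction
`s_α(a,b) ≤ s_γ(a,ℓ) + s_β(ℓ,b) ↔ s_α(a,b) - s_β(ℓ,b) ≤ s_γ(a,ℓ)`.
Finally `s_{σ_n}(b,ℓ) = max(0, b - ℓ)`, plus `1` at `b = ℓ = n + 1`, so that `α ◁ σ_n` has the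
slipface function of `α` except in column `n + 1`, where it is
`max(s_α(a,n+2), s_α(a,n) - 1)`. Hence `α ◁ σ_n` takes the values `min(α n, α(n+1))` and
`max(α n, α(n+1))` at `n` and `n + 1`.
-/

/-- A permutation of ℤ is almost-sign-preserving if only finitely many `n` have
exactly one of `n`, `α n` negative. -/
def ASP (α : Equiv.Perm ℤ) : Prop := {n : ℤ | Xor' (n < 0) (α n < 0)}.Finite

/-- The slipface function `s_α(a,b) = #{n ≥ b : α n < a}`. -/
noncomputable def sF (α : Equiv.Perm ℤ) : ℤ → ℤ → ℕ :=
  fun a b => {n : ℤ | b ≤ n ∧ α n < a}.ncard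

/-- The shift `χ_α = s_α(0,0) - s_{α⁻¹}(0,0)`. -/
noncomputable def shiftASP (α : Equiv.Perm ℤ) : ℤ :=
  (sF α 0 0 : ℤ) - (sF α⁻¹ 0 0 : ℤ)

/-- Bruhat order on ASP: pointwise comparison of slipface functions. -/
def BruhatLE (α β : Equiv.Perm ℤ) : Prop := ∀ a b : ℤ, sF α a b ≤ sF β a b

/-- `α ≤_χ β`: Bruhat order together with equality of shifts. -/
def BruhatLEchi (α β : Equiv.Perm ℤ) : Prop := BruhatLE α β ∧ shiftASP α = shiftASP β

/-- `γ` is the Demazure product `α ⋆ β`: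
`s_γ(a,b) = min_{ℓ} [s_α(a,ℓ) + s_β(ℓ,b)]`. -/
def IsDem (α β γ : Equiv.Perm ℤ) : Prop :=
  ∀ a b : ℤ, IsLeast {x : ℕ | ∃ ℓ : ℤ, x = sF α a ℓ + sF β ℓ b} (sF γ a b)

/-- `γ = α ◁ β`: `s_γ(a,b) = max_ℓ [s_α(a,ℓ) - s_{β⁻¹}(b,ℓ)]`. -/
def IsTriL (α β γ : Equiv.Perm ℤ) : Prop :=
  ∀ a b : ℤ, IsGreatest {x : ℤ | ∃ ℓ : ℤ, x = (sF α a ℓ : ℤ) - (sF β⁻¹ b ℓ : ℤ)}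
    ((sF γ a b : ℤ))

/-- `γ = α ▷ β`: `s_γ(a,b) = max_ℓ [s_β(ℓ,b) - s_{α⁻¹}(ℓ,a)]`. -/
def IsTriR (α β γ : Equiv.Perm ℤ) : Prop :=
  ∀ a b : ℤ, IsGreatest {x : ℤ | ∃ ℓ : ℤ, x = (sF β ℓ b : ℤ) - (sF α⁻¹ ℓ a : ℤ)}
    ((sF γ a b : ℤ))

/-- The set of inversions of a permutation. -/
def InvSet (α : Equiv.Perm ℤ) : Set (ℤ × ℤ) := {p : ℤ × ℤ | p.1 < p.2 ∧ α p.2 < α p.1}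

/-- The intrinsic description of slipface functions of almost-sign-preserving permutations of
shift `χ`, as integer-valued functions. -/
structure IsSlip (s : ℤ → ℤ → ℤ) (χ : ℤ) : Prop where
  nonneg : ∀ a b, 0 ≤ s a b
  ge : ∀ a b, a - b + χ ≤ s a b
  mono : ∀ a a' b, a ≤ a' → s a b ≤ s a' b ∧ s a' b ≤ s a b + (a' - a)
  anti : ∀ a b b', b ≤ b' → s a b' ≤ s a b ∧ s a b ≤ s a b' + (b' - b)
  monge : ∀ a a' b b', a ≤ a' → b ≤ b' → s a b + s a' b' ≤ s a' b + s a b'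
  row_zero : ∀ a, ∃ b, s a b = 0
  col_zero : ∀ b, ∃ a, s a b = 0
  row_lin : ∀ a, ∃ b, s a b = a - b + χ
  col_lin : ∀ b, ∃ a, s a b = a - b + χ

/-! ### Slipface functions of permutations -/

lemma ASP.inv {α : Equiv.Perm ℤ} (h : ASP α) : ASP α⁻¹ := by
  refine (h.image α).subset ?_
  intro n hn
  refine ⟨α⁻¹ n, ?_, by simp⟩
  have hinv : α (α⁻¹ n) = n := by simp
  simp only [Set.mem_ofPred_eq, hinv, Xor', Xor] at hn ⊢
  tauto

lemma ASP.finite {α : Equiv.Perm ℤ} (h : ASP α) (a b : ℤ) :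
    {n : ℤ | b ≤ n ∧ α n < a}.Finite := by
  refine ((h.union (Set.finite_Ico b 0)).union
    ((Set.finite_Ico 0 a).preimage α.injective.injOn)).subset ?_
  rintro n ⟨h1, h2⟩
  simp only [Set.mem_union, Set.mem_ofPred_eq, Set.mem_Ico, Set.mem_preimage, Xor', Xor]
  omega

lemma sF_step {α : Equiv.Perm ℤ} (h : ASP α) (a b : ℤ) :
    (sF α a b : ℤ) = sF α a (b + 1) + if α b < a then 1 else 0 := by
  unfold sF
  split_ifs with hb
  · have : {n : ℤ | b ≤ n ∧ α n < a} = insert b {n : ℤ | b + 1 ≤ n ∧ α n < a} := by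
      ext n
      simp only [Set.mem_ofPred_eq, Set.mem_insert_iff]
      constructor
      · rintro ⟨h1, h2⟩
        by_cases hn : n = b
        · exact Or.inl hn
        · exact Or.inr ⟨by omega, h2⟩
      · rintro (rfl | h1)
        · exact ⟨le_rfl, hb⟩
        · exact ⟨by omega, h1.2⟩
    rw [this, Set.ncard_insert_of_notMem (by simp) (h.finite _ _)]
    push_cast; ring
  · have : {n : ℤ | b ≤ n ∧ α n < a} = {n : ℤ | b + 1 ≤ n ∧ α n < a} := by
      ext n
      simp only [Set.mem_ofPred_eq]
      constructor
      · rintro ⟨h1, h2⟩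
        have : n ≠ b := by rintro rfl; exact hb h2
        exact ⟨by omega, h2⟩
      · rintro ⟨h1, h2⟩
        exact ⟨by omega, h2⟩
    rw [this]; simp

lemma sF_step' {α : Equiv.Perm ℤ} (h : ASP α) (a b : ℤ) :
    (sF α (a + 1) b : ℤ) = sF α a b + if b ≤ α⁻¹ a then 1 else 0 := by
  unfold sF
  split_ifs with hb
  · have : {n : ℤ | b ≤ n ∧ α n < a + 1} = insert (α⁻¹ a) {n : ℤ | b ≤ n ∧ α n < a} := by
      ext n
      simp only [Set.mem_ofPred_eq, Set.mem_insert_iff, Equiv.Perm.eq_inv_iff_eq]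
      constructor
      · rintro ⟨h1, h2⟩
        by_cases hn : α n = a
        · exact Or.inl hn
        · exact Or.inr ⟨h1, by omega⟩
      · rintro (rfl | h1)
        · simpa using hb
        · exact ⟨h1.1, by omega⟩
    rw [this, Set.ncard_insert_of_notMem (by simp) (h.finite _ _)]
    push_cast; ring
  · have : {n : ℤ | b ≤ n ∧ α n < a + 1} = {n : ℤ | b ≤ n ∧ α n < a} := by
      ext n
      simp only [Set.mem_ofPred_eq]
      constructor
      · rintro ⟨h1, h2⟩
        have : α n ≠ a := by rintro rfl; exact hb (by simpa using h1)
        exact ⟨h1, by omega⟩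
      · rintro ⟨h1, h2⟩
        exact ⟨h1, by omega⟩
    rw [this]; simp

lemma sF_row_zero {α : Equiv.Perm ℤ} (h : ASP α) (a : ℤ) : ∃ b, sF α a b = 0 := by
  obtain ⟨B, hB⟩ := (h.finite a 0).bddAbove
  refine ⟨max 0 (B + 1), ?_⟩
  unfold sF
  rw [Set.ncard_eq_zero (h.finite _ _)]
  ext n
  simp only [Set.mem_ofPred_eq, Set.mem_empty_iff_false, iff_false, not_and]
  intro h1 h2
  have := hB (show n ∈ _ from ⟨by omega, h2⟩)
  omega

lemma sF_col_zero {α : Equiv.Perm ℤ} (h : ASP α) (b : ℤ) : ∃ a, sF α a b = 0 := by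
  obtain ⟨B, hB⟩ := ((h.finite 0 b).image α).bddBelow
  refine ⟨min 0 B, ?_⟩
  unfold sF
  rw [Set.ncard_eq_zero (h.finite _ _)]
  ext n
  simp only [Set.mem_ofPred_eq, Set.mem_empty_iff_false, iff_false, not_and]
  intro h1 h2
  have := hB (Set.mem_image_of_mem α (show n ∈ _ from ⟨h1, by omega⟩))
  omega

lemma const_of_succ {f : ℤ → ℤ} (h : ∀ n, f (n + 1) = f n) (m n : ℤ) : f m = f n := by
  have h1 : Monotone f := monotone_int_of_le_succ fun n => (h n).ge
  have h2 : Antitone f := antitone_int_of_succ_le fun n => (h n).le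
  rcases le_total m n with hmn | hmn
  · exact le_antisymm (h1 hmn) (h2 hmn)
  · exact le_antisymm (h2 hmn) (h1 hmn)

/-- `#{n ≥ b : α n < a} - #{n < b : α n ≥ a} - (a - b)` is independent of `a` and `b`; the second
cardinality is written as `s_{α⁻¹}(b,a)`. -/
lemma sF_sub_sF_inv {α : Equiv.Perm ℤ} (h : ASP α) (a b : ℤ) :
    (sF α a b : ℤ) = sF α⁻¹ b a + (a - b + shiftASP α) := by
  have e1 := const_of_succ (f := fun b => (sF α a b : ℤ) - sF α⁻¹ b a - (a - b)) (by
    intro b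
    have h1 := sF_step h a b
    have h2 := sF_step' h.inv b a
    rw [inv_inv] at h2
    split_ifs at h1 h2 <;> omega) b 0
  have e2 := const_of_succ (f := fun a => (sF α a 0 : ℤ) - sF α⁻¹ 0 a - (a - 0)) (by
    intro a
    have h1 := sF_step' h a 0
    have h2 := sF_step h.inv 0 a
    split_ifs at h1 h2 <;> omega) a 0
  simp only [shiftASP] at *
  omega

lemma isSlip_sF {α : Equiv.Perm ℤ} (h : ASP α) :
    IsSlip (fun a b => (sF α a b : ℤ)) (shiftASP α) where
  nonneg a b := by positivity
  ge a b := by have := sF_sub_sF_inv h a b; omega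
  mono a a' b hab := by
    have h1 : Monotone fun a => (sF α a b : ℤ) := monotone_int_of_le_succ fun a => by
      have := sF_step' h a b
      split_ifs at this <;> omega
    have h2 : Antitone fun a => (sF α a b : ℤ) - a := antitone_int_of_succ_le fun a => by
      have := sF_step' h a b
      split_ifs at this <;> omega
    have h1 := h1 hab
    have h2 := h2 hab
    simp only at *
    omega
  anti a b b' hab := by
    have h1 : Antitone fun b => (sF α a b : ℤ) := antitone_int_of_succ_le fun b => by
      have := sF_step h a b
      split_ifs at this <;> omega
    have h2 : Monotone fun b => (sF α a b : ℤ) + b := monotone_int_of_le_succ fun b => by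
      have := sF_step h a b
      split_ifs at this <;> omega
    have h1 := h1 hab
    have h2 := h2 hab
    simp only at *
    omega
  monge a a' b b' haa hbb := by
    have h1 : Antitone fun b => (sF α a' b : ℤ) - sF α a b := antitone_int_of_succ_le fun b => by
      have h1 := sF_step h a b
      have h2 := sF_step h a' b
      split_ifs at h1 h2 <;> omega
    have h1 := h1 hbb
    simp only at *
    omega
  row_zero a := by
    obtain ⟨b, hb⟩ := sF_row_zero h a
    exact ⟨b, by simp [hb]⟩
  col_zero b := by
    obtain ⟨a, ha⟩ := sF_col_zero h b
    exact ⟨a, by simp [ha]⟩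
  row_lin a := by
    obtain ⟨b, hb⟩ := sF_col_zero h.inv a
    have := sF_sub_sF_inv h a b
    exact ⟨b, by omega⟩
  col_lin b := by
    obtain ⟨a, ha⟩ := sF_row_zero h.inv b
    have := sF_sub_sF_inv h a b
    exact ⟨a, by omega⟩

/-- The difference `s_α(a,n) - s_α(a,n+1)` is `1` exactly when `α n < a`, so `s_α` determines `α`. -/
lemma eq_of_sF_eq {α β : Equiv.Perm ℤ} (hα : ASP α) (hβ : ASP β)
    (h : ∀ a b, sF α a b = sF β a b) : α = β := by
  ext n
  have key : ∀ a, α n < a ↔ β n < a := fun a => by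
    have h1 := sF_step hα a n
    have h2 := sF_step hβ a n
    rw [h, h] at h1
    split_ifs at h1 h2 <;> first | tauto | omega
  have h1 := key (α n + 1)
  have h2 := key (β n + 1)
  omega

/-- The function `s_α(a,·)` is determined by its differences `[α b < a]` and one value. -/
lemma sF_eq_of_step {α : Equiv.Perm ℤ} (h : ASP α) (a : ℤ) {f : ℤ → ℤ}
    (hf : ∀ b, f b = f (b + 1) + if α b < a then 1 else 0) {b₀ : ℤ} (h0 : f b₀ = sF α a b₀)
    (b : ℤ) : (sF α a b : ℤ) = f b := by
  have := const_of_succ (f := fun b => (sF α a b : ℤ) - f b) (by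
    intro b
    have h1 := sF_step h a b
    have h2 := hf b
    omega) b b₀
  omega

/-! ### Permutations from slipface functions -/

lemma exists_threshold {t : ℤ → ℤ} (hm : Monotone t) (h01 : ∀ a, 0 ≤ t a ∧ t a ≤ 1)
    (h0 : ∃ a, t a = 0) (h1 : ∃ a, t a = 1) : ∃ m, ∀ a, t a = if m < a then 1 else 0 := by
  obtain ⟨a₁, ha₁⟩ := h1
  obtain ⟨m, hm0, hmax⟩ := Int.exists_greatest_of_bdd (P := fun a => t a = 0)
    ⟨a₁, fun z hz => by
      by_contra hlt
      have := hm (show a₁ ≤ z by omega)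
      omega⟩ h0
  refine ⟨m, fun a => ?_⟩
  split_ifs with ha
  · have := h01 a
    have : t a ≠ 0 := fun h => by have := hmax a h; omega
    omega
  · have := h01 a
    have := hm (show a ≤ m by omega)
    omega

namespace IsSlip

variable {s A B : ℤ → ℤ → ℤ} {χ χ' : ℤ}

lemma zero_of_le (h : IsSlip s χ) {a a' b b' : ℤ} (h0 : s a b = 0) (ha : a' ≤ a) (hb : b ≤ b') :
    s a' b' = 0 := by
  have h1 := h.mono a' a b' ha
  have h2 := h.anti a b b' hb
  have h3 := h.nonneg a' b'
  omega

lemma lin_of_le (h : IsSlip s χ) {a a' b b' : ℤ} (h0 : s a b = a - b + χ) (ha : a ≤ a')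
    (hb : b' ≤ b) : s a' b' = a' - b' + χ := by
  have h1 := h.mono a a' b' ha
  have h2 := h.anti a b' b hb
  have h3 := h.ge a' b'
  omega

lemma exists_perm (h : IsSlip s χ) : ∃ γ, ASP γ ∧ ∀ a b, (sF γ a b : ℤ) = s a b := by
  have hrow : ∀ n, ∃ m, ∀ a, s a n - s a (n + 1) = if m < a then 1 else 0 := fun n => by
    apply exists_threshold (t := fun a => s a n - s a (n + 1))
    · intro a a' ha
      have := h.monge a a' n (n + 1) ha (by omega)
      simp only
      omega
    · intro a
      have := h.anti a n (n + 1) (by omega)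
      omega
    · obtain ⟨a, ha⟩ := h.col_zero n
      have := h.zero_of_le ha le_rfl (show n ≤ n + 1 by omega)
      exact ⟨a, by omega⟩
    · obtain ⟨a, ha⟩ := h.col_lin (n + 1)
      have := h.lin_of_le ha le_rfl (show n ≤ n + 1 by omega)
      exact ⟨a, by omega⟩
  have hcol : ∀ m, ∃ n, ∀ b, 1 - (s (m + 1) b - s m b) = if n < b then 1 else 0 := fun m => by
    apply exists_threshold (t := fun b => 1 - (s (m + 1) b - s m b))
    · intro b b' hb
      have := h.monge m (m + 1) b b' (by omega) hb
      simp only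
      omega
    · intro b
      have := h.mono m (m + 1) b (by omega)
      omega
    · obtain ⟨b, hb⟩ := h.row_lin m
      have := h.lin_of_le hb (show m ≤ m + 1 by omega) le_rfl
      exact ⟨b, by omega⟩
    · obtain ⟨b, hb⟩ := h.row_zero (m + 1)
      have := h.zero_of_le hb (show m ≤ m + 1 by omega) le_rfl
      exact ⟨b, by omega⟩
  choose f hf using hrow
  choose g hg using hcol
  -- `f n = m` and `g m = n` both say that the mixed difference of `s` at `(m, n)` equals `1`.
  have hgf : ∀ n, g (f n) = n := fun n => by
    have h1 := hf n (f n)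
    have h2 := hf n (f n + 1)
    have h3 := hg (f n) n
    have h4 := hg (f n) (n + 1)
    split_ifs at h1 h2 h3 h4 <;> omega
  have hfg : ∀ m, f (g m) = m := fun m => by
    have h1 := hg m (g m)
    have h2 := hg m (g m + 1)
    have h3 := hf (g m) m
    have h4 := hf (g m) (m + 1)
    split_ifs at h1 h2 h3 h4 <;> omega
  have hASP : ASP ⟨f, g, hgf, hfg⟩ := by
    obtain ⟨b₁, hb₁⟩ := h.row_zero 0
    obtain ⟨b₂, hb₂⟩ := h.row_lin 0
    refine (Set.finite_Ico (min 0 (b₂ - 1)) (max 0 b₁)).subset ?_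
    intro n hn
    simp only [Set.mem_ofPred_eq, Equiv.coe_fn_mk, Xor', Xor] at hn
    have h1 := hf n 0
    have h2 : b₁ ≤ n → s 0 n = 0 ∧ s 0 (n + 1) = 0 := fun hle =>
      ⟨h.zero_of_le hb₁ le_rfl hle, h.zero_of_le hb₁ le_rfl (by omega)⟩
    have h3 : n + 1 ≤ b₂ → s 0 n = 0 - n + χ ∧ s 0 (n + 1) = 0 - (n + 1) + χ := fun hle =>
      ⟨h.lin_of_le hb₂ le_rfl (by omega), h.lin_of_le hb₂ le_rfl hle⟩
    rw [Set.mem_Ico]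
    split_ifs at h1 <;> omega
  refine ⟨_, hASP, fun a b => ?_⟩
  obtain ⟨b₁, hb₁⟩ := h.row_zero a
  obtain ⟨b₂, hb₂⟩ := (isSlip_sF hASP).row_zero a
  refine sF_eq_of_step hASP a (f := s a) (b₀ := max b₁ b₂) (fun b => ?_) ?_ b
  · have := hf b a
    simp only [Equiv.coe_fn_mk]
    omega
  · rw [h.zero_of_le hb₁ le_rfl (le_max_left _ _),
      (isSlip_sF hASP).zero_of_le hb₂ le_rfl (le_max_right _ _)]

/-! ### Min-plus and max-minus products -/

/-- Min-plus products of slipface functions are slipface functions. For the Monge inequality at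
`(a, b)`, `(a', b')` with minimizers `ℓ` at `(a', b)` and `ℓ'` at `(a, b')`, use the Monge inequality
of `A` if `ℓ ≤ ℓ'` and that of `B` otherwise. -/
lemma minPlus (hA : IsSlip A χ) (hB : IsSlip B χ') {f : ℤ → ℤ → ℤ}
    (hle : ∀ a b ℓ, f a b ≤ A a ℓ + B ℓ b) (hex : ∀ a b, ∃ ℓ, f a b = A a ℓ + B ℓ b) :
    IsSlip f (χ + χ') := by
  have hnn : ∀ a b, 0 ≤ f a b := fun a b => by
    obtain ⟨ℓ, hℓ⟩ := hex a b
    have := hA.nonneg a ℓ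
    have := hB.nonneg ℓ b
    omega
  have hge : ∀ a b, a - b + (χ + χ') ≤ f a b := fun a b => by
    obtain ⟨ℓ, hℓ⟩ := hex a b
    have := hA.ge a ℓ
    have := hB.ge ℓ b
    omega
  refine ⟨hnn, hge, ?_, ?_, ?_, ?_, ?_, ?_, ?_⟩
  · intro a a' b h
    obtain ⟨ℓ, hℓ⟩ := hex a b
    obtain ⟨ℓ', hℓ'⟩ := hex a' b
    have := hle a b ℓ'
    have := hle a' b ℓ
    have := hA.mono a a' ℓ h
    have := hA.mono a a' ℓ' h
    omega
  · intro a b b' h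
    obtain ⟨ℓ, hℓ⟩ := hex a b
    obtain ⟨ℓ', hℓ'⟩ := hex a b'
    have := hle a b ℓ'
    have := hle a b' ℓ
    have := hB.anti ℓ b b' h
    have := hB.anti ℓ' b b' h
    omega
  · intro a a' b b' ha hb
    obtain ⟨ℓ, hℓ⟩ := hex a' b
    obtain ⟨ℓ', hℓ'⟩ := hex a b'
    rcases le_total ℓ ℓ' with h | h
    · have := hA.monge a a' ℓ ℓ' ha h
      have := hle a b ℓ
      have := hle a' b' ℓ'
      omega
    · have := hB.monge ℓ' ℓ b b' h hb
      have := hle a b ℓ'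
      have := hle a' b' ℓ
      omega
  · intro a
    obtain ⟨ℓ, hℓ⟩ := hA.row_zero a
    obtain ⟨b, hb⟩ := hB.row_zero ℓ
    refine ⟨b, ?_⟩
    have := hle a b ℓ
    have := hnn a b
    omega
  · intro b
    obtain ⟨ℓ, hℓ⟩ := hB.col_zero b
    obtain ⟨a, ha⟩ := hA.col_zero ℓ
    refine ⟨a, ?_⟩
    have := hle a b ℓ
    have := hnn a b
    omega
  · intro a
    obtain ⟨ℓ, hℓ⟩ := hA.row_lin a
    obtain ⟨b, hb⟩ := hB.row_lin ℓ
    refine ⟨b, ?_⟩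
    have := hle a b ℓ
    have := hge a b
    omega
  · intro b
    obtain ⟨ℓ, hℓ⟩ := hB.col_lin b
    obtain ⟨a, ha⟩ := hA.col_lin ℓ
    refine ⟨a, ?_⟩
    have := hle a b ℓ
    have := hge a b
    omega

/-- The differences `A(a,ℓ) - B(b,ℓ)` are bounded above: if `A(a,L) = 0` then
`A(a,ℓ) ≤ max(0, L - ℓ)`, while `B(b,ℓ) ≥ max(0, b - ℓ + χ')`. -/
lemma exists_max (hA : IsSlip A χ) (hB : IsSlip B χ') (a b : ℤ) :
    ∃ m : ℤ, IsGreatest {x : ℤ | ∃ ℓ : ℤ, x = A a ℓ - B b ℓ} m := by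
  obtain ⟨L, hL⟩ := hA.row_zero a
  obtain ⟨m, h1, h2⟩ := Int.exists_greatest_of_bdd (P := fun x => ∃ ℓ : ℤ, x = A a ℓ - B b ℓ)
    ⟨max 0 (L - b - χ'), by
      rintro z ⟨ℓ, rfl⟩
      have := hB.nonneg b ℓ
      have := hB.ge b ℓ
      rcases le_total ℓ L with h | h
      · have := hA.anti a ℓ L h
        omega
      · have := hA.anti a L ℓ h
        omega⟩ ⟨_, L, rfl⟩
  exact ⟨m, h1, h2⟩

/-- Max-minus products of slipface functions are slipface functions. The Monge inequality follows
from those of `A` and `B`, according to the relative position of two maximizers. The bound `0` is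
attained at `(a, b)` as soon as `A(a, b + χ') = 0`, and similarly for the linear bound. -/
lemma maxMinus (hA : IsSlip A χ) (hB : IsSlip B χ') {g : ℤ → ℤ → ℤ}
    (hle : ∀ a b ℓ, A a ℓ - B b ℓ ≤ g a b) (hex : ∀ a b, ∃ ℓ, g a b = A a ℓ - B b ℓ) :
    IsSlip g (χ - χ') := by
  have hnn : ∀ a b, 0 ≤ g a b := fun a b => by
    obtain ⟨ℓ, hℓ⟩ := hB.row_zero b
    have := hle a b ℓ
    have := hA.nonneg a ℓ
    omega
  have hge : ∀ a b, a - b + (χ - χ') ≤ g a b := fun a b => by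
    obtain ⟨ℓ, hℓ⟩ := hB.row_lin b
    have := hle a b ℓ
    have := hA.ge a ℓ
    omega
  have hzero : ∀ a b, A a (b + χ') = 0 → g a b = 0 := fun a b h0 => by
    have := hnn a b
    obtain ⟨ℓ, hℓ⟩ := hex a b
    have := hB.nonneg b ℓ
    have := hB.ge b ℓ
    rcases le_total ℓ (b + χ') with h | h
    · have := hA.anti a _ _ h
      omega
    · have := hA.anti a _ _ h
      omega
  have hlin : ∀ a b, A a (b + χ') = a - (b + χ') + χ → g a b = a - b + (χ - χ') := fun a b h0 => by
    have := hge a b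
    obtain ⟨ℓ, hℓ⟩ := hex a b
    have := hB.nonneg b ℓ
    have := hB.ge b ℓ
    rcases le_total ℓ (b + χ') with h | h
    · have := hA.anti a _ _ h
      omega
    · have := hA.anti a _ _ h
      omega
  refine ⟨hnn, hge, ?_, ?_, ?_, ?_, ?_, ?_, ?_⟩
  · intro a a' b h
    obtain ⟨ℓ, hℓ⟩ := hex a b
    obtain ⟨ℓ', hℓ'⟩ := hex a' b
    have := hle a b ℓ'
    have := hle a' b ℓ
    have := hA.mono a a' ℓ h
    have := hA.mono a a' ℓ' h
    omega
  · intro a b b' h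
    obtain ⟨ℓ, hℓ⟩ := hex a b
    obtain ⟨ℓ', hℓ'⟩ := hex a b'
    have := hle a b ℓ'
    have := hle a b' ℓ
    have := hB.mono b b' ℓ h
    have := hB.mono b b' ℓ' h
    omega
  · intro a a' b b' ha hb
    obtain ⟨ℓ, hℓ⟩ := hex a b
    obtain ⟨ℓ', hℓ'⟩ := hex a' b'
    rcases le_total ℓ ℓ' with h | h
    · have := hA.monge a a' ℓ ℓ' ha h
      have := hle a' b ℓ
      have := hle a b' ℓ'
      omega
    · have := hB.monge b b' ℓ' ℓ hb h
      have := hle a b' ℓ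
      have := hle a' b ℓ'
      omega
  · intro a
    obtain ⟨L, hL⟩ := hA.row_zero a
    exact ⟨L - χ', hzero _ _ (by rwa [sub_add_cancel])⟩
  · intro b
    obtain ⟨a, ha⟩ := hA.col_zero (b + χ')
    exact ⟨a, hzero _ _ ha⟩
  · intro a
    obtain ⟨L, hL⟩ := hA.row_lin a
    exact ⟨L - χ', hlin _ _ (by rwa [sub_add_cancel])⟩
  · intro b
    obtain ⟨a, ha⟩ := hA.col_lin (b + χ')
    exact ⟨a, hlin _ _ ha⟩

end IsSlip

/-! ### The operations on permutations -/

lemma exists_isDem {α β : Equiv.Perm ℤ} (hα : ASP α) (hβ : ASP β) :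
    ∃ γ, ASP γ ∧ IsDem α β γ := by
  have hmin : ∀ a b : ℤ, ∃ m : ℕ, IsLeast {x : ℕ | ∃ ℓ : ℤ, x = sF α a ℓ + sF β ℓ b} m :=
    fun a b => by
      have hne : {x : ℕ | ∃ ℓ : ℤ, x = sF α a ℓ + sF β ℓ b}.Nonempty := ⟨_, 0, rfl⟩
      exact ⟨_, Nat.sInf_mem hne, fun x hx => Nat.sInf_le hx⟩
  choose f hf using hmin
  obtain ⟨γ, hγ, hs⟩ := ((isSlip_sF hα).minPlus (isSlip_sF hβ) (f := fun a b => (f a b : ℤ))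
    (fun a b ℓ => by exact_mod_cast (hf a b).2 ⟨ℓ, rfl⟩)
    (fun a b => by
      obtain ⟨ℓ, hℓ⟩ := (hf a b).1
      exact ⟨ℓ, by exact_mod_cast hℓ⟩)).exists_perm
  refine ⟨γ, hγ, fun a b => ?_⟩
  have : sF γ a b = f a b := by exact_mod_cast hs a b
  rw [this]
  exact hf a b

lemma exists_isTriL {α β : Equiv.Perm ℤ} (hα : ASP α) (hβ : ASP β) :
    ∃ γ, ASP γ ∧ IsTriL α β γ := by
  choose g hg using (isSlip_sF hα).exists_max (isSlip_sF hβ.inv)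
  obtain ⟨γ, hγ, hs⟩ := ((isSlip_sF hα).maxMinus (isSlip_sF hβ.inv) (g := g)
    (fun a b ℓ => (hg a b).2 ⟨ℓ, rfl⟩) (fun a b => (hg a b).1)).exists_perm
  refine ⟨γ, hγ, fun a b => ?_⟩
  rw [hs]
  exact hg a b

lemma ASP_swap (n : ℤ) : ASP (Equiv.swap n (n + 1)) := by
  refine (Set.toFinite {n, n + 1}).subset ?_
  intro m hm
  by_contra hne
  simp only [Set.mem_insert_iff, Set.mem_singleton_iff, not_or] at hne
  simp [Equiv.swap_apply_of_ne_of_ne hne.1 hne.2, Xor'] at hm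

lemma sF_swap (n b ℓ : ℤ) : (sF (Equiv.swap n (n + 1)) b ℓ : ℤ) =
    max 0 (b - ℓ) + if b = n + 1 ∧ ℓ = n + 1 then 1 else 0 := by
  have h := ASP_swap n
  obtain ⟨b₀, hb₀⟩ := (isSlip_sF h).row_zero b
  refine sF_eq_of_step h b
    (f := fun ℓ => max 0 (b - ℓ) + if b = n + 1 ∧ ℓ = n + 1 then 1 else 0)
    (b₀ := max b₀ (max b (n + 2))) (fun ℓ => ?_) ?_ ℓ
  · simp only [Equiv.swap_apply_def]
    split_ifs <;> omega
  · rw [(isSlip_sF h).zero_of_le hb₀ le_rfl (le_max_left _ _)]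
    split_ifs <;> omega

/-- The product `α ◁ σ_n` arranges the values of `α` at `n` and `n + 1` in increasing order. -/
lemma isTriL_swap_apply {α δ : Equiv.Perm ℤ} (hα : ASP α) (hδ : ASP δ) (n : ℤ)
    (h : IsTriL α (Equiv.swap n (n + 1)) δ) (m : ℤ) :
    δ m = if m = n then min (α n) (α (n + 1))
      else if m = n + 1 then max (α n) (α (n + 1)) else α m := by
  have hle : ∀ a b ℓ : ℤ, (sF α a ℓ : ℤ) -
      (max 0 (b - ℓ) + if b = n + 1 ∧ ℓ = n + 1 then 1 else 0) ≤ sF δ a b := fun a b ℓ => by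
    rw [← sF_swap]
    exact (h a b).2 ⟨ℓ, by rw [Equiv.swap_inv]⟩
  have hex : ∀ a b : ℤ, ∃ ℓ : ℤ, (sF δ a b : ℤ) = sF α a ℓ -
      (max 0 (b - ℓ) + if b = n + 1 ∧ ℓ = n + 1 then 1 else 0) := fun a b => by
    obtain ⟨ℓ, hℓ⟩ := (h a b).1
    exact ⟨ℓ, by rw [hℓ, Equiv.swap_inv, sF_swap]⟩
  have hne : ∀ a b : ℤ, b ≠ n + 1 → (sF δ a b : ℤ) = sF α a b := fun a b hb => by
    have h1 := hle a b b
    obtain ⟨ℓ, h2⟩ := hex a b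
    rw [if_neg (by omega)] at h1 h2
    rcases le_total ℓ b with hl | hl
    · have := (isSlip_sF hα).anti a _ _ hl
      omega
    · have := (isSlip_sF hα).anti a _ _ hl
      omega
  have heq : ∀ a : ℤ, (sF δ a (n + 1) : ℤ) = max (sF α a (n + 2) : ℤ) (sF α a n - 1) :=
    fun a => by
      have h1 := hle a (n + 1) (n + 2)
      have h1' := hle a (n + 1) n
      obtain ⟨ℓ, h2⟩ := hex a (n + 1)
      rw [if_neg (by omega)] at h1 h1'
      have h3 := (isSlip_sF hα).anti a (n + 1) (n + 2) (by omega)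
      split_ifs at h2 with hl
      · obtain ⟨-, rfl⟩ := hl
        omega
      · rcases (show ℓ ≤ n ∨ n + 2 ≤ ℓ by omega) with hl | hl
        · have := (isSlip_sF hα).anti a _ _ hl
          omega
        · have := (isSlip_sF hα).anti a _ _ hl
          omega
  have e : n + 1 + 1 = n + 2 := by ring
  have key : ∀ a, δ m < a ↔ (if m = n then min (α n) (α (n + 1))
      else if m = n + 1 then max (α n) (α (n + 1)) else α m) < a := fun a => by
    have h1 := sF_step hδ a m
    have h2 := sF_step hα a n
    have h3 := sF_step hα a (n + 1)
    have h4 := heq a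
    have h5 := hne a n (by omega)
    have h6 := hne a (n + 2) (by omega)
    rw [e] at h3
    by_cases hm : m = n
    · subst hm
      rw [if_pos rfl]
      split_ifs at h1 h2 h3 <;> omega
    · by_cases hm' : m = n + 1
      · subst hm'
        rw [if_neg hm, if_pos rfl]
        rw [e] at h1
        split_ifs at h1 h2 h3 <;> omega
      · rw [if_neg hm, if_neg hm']
        have h7 := sF_step hα a m
        rw [hne a m hm', hne a (m + 1) (by omega)] at h1
        split_ifs at h1 h7 <;> omega
  have h1 := key (δ m + 1)
  have h2 := (key ((if m = n then min (α n) (α (n + 1))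
      else if m = n + 1 then max (α n) (α (n + 1)) else α m) + 1)).2 (by omega)
  omega

/-- Existence and characterizations of `α ◁ β`: (1) the defining maxima exist and there
is a unique γ ∈ ASP realizing them; (2) `α ◁ β⁻¹` is the Bruhat-minimum of
`{γ : γ ⋆ β ≥ α}`; (3) `α ◁ σ_n` is `α σ_n` if `α(n) > α(n+1)` and `α` otherwise. -/
theorem triL_exists (α β : Equiv.Perm ℤ) (hα : ASP α) (hβ : ASP β) :
    ((∀ a b : ℤ, ∃ m : ℤ,
        IsGreatest {x : ℤ | ∃ ℓ : ℤ, x = (sF α a ℓ : ℤ) - (sF β⁻¹ b ℓ : ℤ)} m) ∧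
      (∃! γ : Equiv.Perm ℤ, ASP γ ∧ IsTriL α β γ)) ∧
    (∀ δ : Equiv.Perm ℤ, ASP δ → IsTriL α β⁻¹ δ →
      ((∃ ε : Equiv.Perm ℤ, ASP ε ∧ IsDem δ β ε ∧ BruhatLE α ε) ∧
        (∀ γ : Equiv.Perm ℤ, ASP γ →
          (∃ ε : Equiv.Perm ℤ, ASP ε ∧ IsDem γ β ε ∧ BruhatLE α ε) → BruhatLE δ γ))) ∧
    (∀ n : ℤ, ∀ δ : Equiv.Perm ℤ, ASP δ → IsTriL α (Equiv.swap n (n+1)) δ →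
      δ = if α (n+1) < α n then α * Equiv.swap n (n+1) else α) := by
  refine ⟨⟨(isSlip_sF hα).exists_max (isSlip_sF hβ.inv), ?_⟩, ?_, ?_⟩
  · obtain ⟨γ, hγ, ht⟩ := exists_isTriL hα hβ
    refine ⟨γ, ⟨hγ, ht⟩, ?_⟩
    rintro γ' ⟨hγ', ht'⟩
    exact eq_of_sF_eq hγ' hγ fun a b => by exact_mod_cast (ht' a b).unique (ht a b)
  · intro δ hδ ht
    simp only [IsTriL, inv_inv] at ht
    refine ⟨?_, ?_⟩
    · obtain ⟨ε, hε, hd⟩ := exists_isDem hδ hβ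
      refine ⟨ε, hε, hd, fun a b => ?_⟩
      obtain ⟨ℓ, hℓ⟩ := (hd a b).1
      have := (ht a ℓ).2 ⟨b, rfl⟩
      omega
    · rintro γ hγ ⟨ε, hε, hd, hle⟩ a b
      obtain ⟨ℓ, hℓ⟩ := (ht a b).1
      have h1 := hle a ℓ
      have h2 := (hd a ℓ).2 ⟨b, rfl⟩
      omega
  · intro n δ hδ ht
    ext m
    rw [isTriL_swap_apply hα hδ n ht m]
    by_cases hm : m = n
    · subst hm
      split_ifs <;> simp <;> omega
    · by_cases hm' : m = n + 1
      · subst hm'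
        split_ifs <;> simp <;> omega
      · split_ifs <;> simp [Equiv.swap_apply_of_ne_of_ne hm hm']
end

section
/- For all α, β ∈ ASP, Inv(β) ⊆ Inv(α ⋆ β) and Inv(α⁻¹) ⊆ Inv((α ⋆ β)⁻¹); that is, β ≤_L α ⋆ β and α ≤_R α ⋆ β in the weak orders. -/
theorem sF_finite {α : Equiv.Perm ℤ} (hα : ASP α) (a b : ℤ) :
    {n : ℤ | b ≤ n ∧ α n < a}.Finite := by
  -- Outside `[b, 0)` and `α⁻¹ [0, a)`, such an `n` is nonnegative with negative image.
  refine ((hα.union (Set.finite_Ico b 0)).union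
    ((Set.finite_Ico 0 a).preimage α.injective.injOn)).subset ?_
  rintro n ⟨h1, h2⟩
  by_cases hn : n < 0
  · exact Or.inl (Or.inr ⟨h1, hn⟩)
  by_cases han : α n < 0
  · exact Or.inl (Or.inl (Or.inr ⟨han, hn⟩))
  · exact Or.inr ⟨not_lt.1 han, h2⟩

theorem sF_step_right {α : Equiv.Perm ℤ} (hα : ASP α) (a b : ℤ) :
    sF α a b = sF α a (b + 1) + if α b < a then 1 else 0 := by
  unfold sF
  split_ifs with h
  · rw [← Set.ncard_insert_of_notMem (a := b) (by simp) (sF_finite hα a (b + 1))]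
    congr 1
    ext n
    simp only [Set.mem_ofPred_eq, Set.mem_insert_iff]
    by_cases hn : n = b
    · subst hn; simp [h]
    · simp only [hn, false_or]; omega
  · rw [add_zero]
    congr 1
    ext n
    simp only [Set.mem_ofPred_eq]
    by_cases hn : n = b
    · subst hn; simp [h]
    · omega

theorem sF_step_left {α : Equiv.Perm ℤ} (hα : ASP α) (a b : ℤ) :
    sF α (a + 1) b = sF α a b + if b ≤ α⁻¹ a then 1 else 0 := by
  unfold sF
  have key : ∀ n, α n = a ↔ n = α⁻¹ a := fun n => by rw [Equiv.Perm.eq_inv_iff_eq]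
  split_ifs with h
  · rw [← Set.ncard_insert_of_notMem (a := α⁻¹ a) (by simp) (sF_finite hα a b)]
    congr 1
    ext n
    simp only [Set.mem_ofPred_eq, Set.mem_insert_iff]
    have := key n
    by_cases hn : n = α⁻¹ a
    · have := this.2 hn
      omega
    · have h3 : α n ≠ a := fun e => hn (this.1 e)
      simp only [hn, false_or]; omega
  · rw [add_zero]
    congr 1
    ext n
    simp only [Set.mem_ofPred_eq]
    have := key n
    by_cases hn : n = α⁻¹ a
    · have := this.2 hn
      omega
    · have h3 : α n ≠ a := fun e => hn (this.1 e)
      omega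

/-- The set counted by `s_α(a',b)` contains those counted by `s_α(a',b')` and `s_α(a,b)`, whose
intersection is the one counted by `s_α(a,b')`. -/
theorem sF_exchange {α : Equiv.Perm ℤ} (hα : ASP α) {a a' b b' : ℤ} (ha : a ≤ a') (hb : b ≤ b') :
    sF α a' b' + sF α a b ≤ sF α a' b + sF α a b' := by
  unfold sF
  rw [← Set.ncard_union_add_ncard_inter _ _ (sF_finite hα a' b') (sF_finite hα a b)]
  refine Nat.add_le_add (Set.ncard_le_ncard ?_ (sF_finite hα a' b))
    (Set.ncard_le_ncard ?_ (sF_finite hα a b'))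
  · rintro n (⟨h1, h2⟩ | ⟨h1, h2⟩) <;> constructor <;> omega
  · rintro n ⟨⟨h1, h2⟩, h3, h4⟩
    exact ⟨h1, h4⟩

theorem IsDem.le {α β γ : Equiv.Perm ℤ} (h : IsDem α β γ) (a b ℓ : ℤ) :
    sF γ a b ≤ sF α a ℓ + sF β ℓ b := (h a b).2 ⟨ℓ, rfl⟩

theorem IsDem.inv_right {α β γ : Equiv.Perm ℤ} (hβ : ASP β) (hγ : ASP γ) (hdem : IsDem α β γ) :
    InvSet β ⊆ InvSet γ := by
  rintro ⟨u, v⟩ ⟨huv, hlt⟩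
  refine ⟨huv, ?_⟩
  simp only at huv hlt ⊢
  by_contra hcon
  have hne : γ u ≠ γ v := fun e => huv.ne (γ.injective e)
  obtain ⟨a, ha⟩ : ∃ a, a = γ u + 1 := ⟨_, rfl⟩
  have e1 := sF_step_right hγ a u
  have e2 := sF_step_right hγ a v
  rw [if_pos (by omega)] at e1
  rw [if_neg (by omega)] at e2
  have hu : ∀ ℓ, sF γ a (u + 1) = sF α a ℓ + sF β ℓ (u + 1) → β u < ℓ := by
    intro ℓ hℓ
    by_contra hc
    have h1 := hdem.le a u ℓ
    have h2 := sF_step_right hβ ℓ u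
    rw [if_neg hc] at h2
    omega
  obtain ⟨ℓ, hℓ⟩ := (hdem a (u + 1)).1
  obtain ⟨m, hm⟩ := (hdem a v).1
  have hv : m ≤ β v := by
    by_contra hc
    have h1 := hdem.le a (v + 1) m
    have h2 := sF_step_right hβ m v
    rw [if_pos (by omega)] at h2
    omega
  have h1 := hu ℓ hℓ
  have h2 := sF_exchange hβ (show m ≤ ℓ by omega) (show u + 1 ≤ v by omega)
  have h3 := hdem.le a v ℓ
  have h4 := hdem.le a (u + 1) m
  have h5 := hu m (by omega)
  omega

theorem IsDem.inv_left {α β γ : Equiv.Perm ℤ} (hα : ASP α) (hγ : ASP γ) (hdem : IsDem α β γ) :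
    InvSet α⁻¹ ⊆ InvSet γ⁻¹ := by
  rintro ⟨u, v⟩ ⟨huv, hlt⟩
  refine ⟨huv, ?_⟩
  simp only at huv hlt ⊢
  by_contra hcon
  have hne : γ⁻¹ u ≠ γ⁻¹ v := fun e => huv.ne (γ⁻¹.injective e)
  obtain ⟨b, hb⟩ : ∃ b, b = γ⁻¹ v := ⟨_, rfl⟩
  have e1 := sF_step_left hγ v b
  have e2 := sF_step_left hγ u b
  rw [if_pos (by omega)] at e1
  rw [if_neg (by omega)] at e2
  have hv : ∀ ℓ, sF γ v b = sF α v ℓ + sF β ℓ b → ℓ ≤ α⁻¹ v := by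
    intro ℓ hℓ
    by_contra hc
    have h1 := hdem.le (v + 1) b ℓ
    have h2 := sF_step_left hα v ℓ
    rw [if_neg hc] at h2
    omega
  obtain ⟨ℓ, hℓ⟩ := (hdem v b).1
  obtain ⟨m, hm⟩ := (hdem (u + 1) b).1
  have hu : α⁻¹ u < m := by
    by_contra hc
    have h1 := hdem.le u b m
    have h2 := sF_step_left hα u m
    rw [if_pos (by omega)] at h2
    omega
  have h1 := hv ℓ hℓ
  have h2 := sF_exchange hα (show u + 1 ≤ v by omega) (show ℓ ≤ m by omega)
  have h3 := hdem.le (u + 1) b ℓ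
  have h4 := hdem.le v b m
  have h5 := hv m (by omega)
  omega

/-- `Inv(β) ⊆ Inv(α ⋆ β)` and `Inv(α⁻¹) ⊆ Inv((α ⋆ β)⁻¹)`, i.e. `β ≤_L α ⋆ β` and
`α ≤_R α ⋆ β` in the weak orders. -/
theorem weak_le_star (α β γ : Equiv.Perm ℤ) (hα : ASP α) (hβ : ASP β) (hγ : ASP γ)
    (hdem : IsDem α β γ) :
    InvSet β ⊆ InvSet γ ∧ InvSet α⁻¹ ⊆ InvSet γ⁻¹ :=
  ⟨hdem.inv_right hβ hγ, hdem.inv_left hα hγ⟩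
end
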